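/- arXiv:nlin/0208007 — 2 statements merged into one kernel-verified Lean document; each statement's English description precedes it below -/
import Mathlib

section
/- Let (Ω, μ) be a measure space, let q > 1 be a real number, let k ≥ 1, let λ_1,…,λ_k > 0 with λ_1 + ⋯ + λ_k = 1, and let f_1,…,f_k : Ω → ℝ be nonnegative measurable functions such that each f_i^q is integrable with respect to μ. If ∫_Ω (Σ_{i=1}^k λ_i f_i)^q dμ = Σ_{i=1}^k λ_i ∫_Ω f_i^q dμ, then f_i = f_j μ-almost everywhere for all i, j. (This is the strict-convexity equality case used to prove that a density operator minimizing the Rényi–Wehrl entropy must be a pure state: equality in the convexity inequality for the q-th moment of a mixture forces all components to have the same Husimi function almost everywhere.) -/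
open MeasureTheory

section ConvexMixture

variable {Ω E ι : Type*} [MeasurableSpace Ω] {μ : Measure Ω} [AddCommGroup E] [Module ℝ E]
  {s : Set E} {g : E → ℝ} {t : Finset ι} {w : ι → ℝ} {f : ι → Ω → E}

lemma ae_map_sum_le_of_convexOn (hg : ConvexOn ℝ s g) (hw : ∀ i ∈ t, 0 ≤ w i)
    (hw1 : ∑ i ∈ t, w i = 1) (hf : ∀ i ∈ t, ∀ᵐ ω ∂μ, f i ω ∈ s) :
    ∀ᵐ ω ∂μ, g (∑ i ∈ t, w i • f i ω) ≤ ∑ i ∈ t, w i * g (f i ω) := by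
  filter_upwards [(Finset.eventually_all t).2 hf] with ω hω
  exact hg.map_sum_le hw hw1 hω

lemma integrable_map_sum_of_convexOn (hg : ConvexOn ℝ s g) (hg0 : ∀ x ∈ s, 0 ≤ g x)
    (hw : ∀ i ∈ t, 0 ≤ w i) (hw1 : ∑ i ∈ t, w i = 1) (hf : ∀ i ∈ t, ∀ᵐ ω ∂μ, f i ω ∈ s)
    (hint : ∀ i ∈ t, Integrable (fun ω => g (f i ω)) μ)
    (hmeas : AEStronglyMeasurable (fun ω => g (∑ i ∈ t, w i • f i ω)) μ) :
    Integrable (fun ω => g (∑ i ∈ t, w i • f i ω)) μ := by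
  have hnonneg : ∀ᵐ ω ∂μ, 0 ≤ g (∑ i ∈ t, w i • f i ω) := by
    filter_upwards [(Finset.eventually_all t).2 hf] with ω hω
    exact hg0 _ (hg.1.sum_mem hw hw1 hω)
  exact integrable_of_le_of_le hmeas hnonneg (ae_map_sum_le_of_convexOn hg hw hw1 hf)
    (integrable_zero Ω ℝ μ) (integrable_finsetSum t fun i hi => (hint i hi).const_mul (w i))

lemma ae_eq_of_integral_map_sum_eq_of_strictConvexOn (hg : StrictConvexOn ℝ s g)
    (hw : ∀ i ∈ t, 0 < w i) (hw1 : ∑ i ∈ t, w i = 1) (hf : ∀ i ∈ t, ∀ᵐ ω ∂μ, f i ω ∈ s)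
    (hint : ∀ i ∈ t, Integrable (fun ω => g (f i ω)) μ)
    (hmix : Integrable (fun ω => g (∑ i ∈ t, w i • f i ω)) μ)
    (heq : ∫ ω, g (∑ i ∈ t, w i • f i ω) ∂μ = ∑ i ∈ t, w i * ∫ ω, g (f i ω) ∂μ) :
    ∀ i ∈ t, ∀ j ∈ t, f i =ᵐ[μ] f j := by
  have hterm : ∀ i ∈ t, Integrable (fun ω => w i * g (f i ω)) μ :=
    fun i hi => (hint i hi).const_mul (w i)
  have hjensen : ∀ᵐ ω ∂μ, g (∑ i ∈ t, w i • f i ω) ≤ ∑ i ∈ t, w i * g (f i ω) :=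
    ae_map_sum_le_of_convexOn hg.convexOn (fun i hi => (hw i hi).le) hw1 hf
  have hintegrals :
      ∫ ω, g (∑ i ∈ t, w i • f i ω) ∂μ = ∫ ω, ∑ i ∈ t, w i * g (f i ω) ∂μ := by
    rw [integral_finsetSum t hterm, heq]
    simp only [integral_const_mul]
  have hae : ∀ᵐ ω ∂μ, g (∑ i ∈ t, w i • f i ω) = ∑ i ∈ t, w i * g (f i ω) :=
    (integral_eq_iff_of_ae_le hmix (integrable_finsetSum t hterm) hjensen).1 hintegrals
  intro i hi j hj
  filter_upwards [hae, (Finset.eventually_all t).2 hf] with ω hω hωs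
  exact hg.eq_of_le_map_sum hw hw1 hωs hω.ge hi hj

theorem eq_ae_of_integral_rpow_mixture_eq_general (hg : StrictConvexOn ℝ s g)
    (hg0 : ∀ x ∈ s, 0 ≤ g x) (hw : ∀ i ∈ t, 0 < w i) (hw1 : ∑ i ∈ t, w i = 1)
    (hf : ∀ i ∈ t, ∀ᵐ ω ∂μ, f i ω ∈ s) (hint : ∀ i ∈ t, Integrable (fun ω => g (f i ω)) μ)
    (hmeas : AEStronglyMeasurable (fun ω => g (∑ i ∈ t, w i • f i ω)) μ)
    (heq : ∫ ω, g (∑ i ∈ t, w i • f i ω) ∂μ = ∑ i ∈ t, w i * ∫ ω, g (f i ω) ∂μ) :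
    ∀ i ∈ t, ∀ j ∈ t, f i =ᵐ[μ] f j :=
  ae_eq_of_integral_map_sum_eq_of_strictConvexOn hg hw hw1 hf hint
    (integrable_map_sum_of_convexOn hg.convexOn hg0 (fun i hi => (hw i hi).le) hw1 hf hint hmeas)
    heq

end ConvexMixture

/-- The strict-convexity equality case for the `q`-th power: if the `q`-th moment of a convex
mixture of nonnegative functions equals the mixture of the `q`-th moments, then all components
coincide almost everywhere. This is the key step of the purity lemma for the Rényi–Wehrl
entropy. -/
theorem eq_ae_of_integral_rpow_mixture_eq {Ω : Type*} [MeasurableSpace Ω] (μ : Measure Ω)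
    (q : ℝ) (hq : 1 < q) (k : ℕ) (hk : 1 ≤ k)
    (w : Fin k → ℝ) (hw : ∀ i, 0 < w i) (hw1 : ∑ i, w i = 1)
    (f : Fin k → Ω → ℝ) (hmeas : ∀ i, Measurable (f i)) (hpos : ∀ i ω, 0 ≤ f i ω)
    (hint : ∀ i, Integrable (fun ω => f i ω ^ q) μ)
    (heq : ∫ ω, (∑ i, w i * f i ω) ^ q ∂μ = ∑ i, w i * ∫ ω, f i ω ^ q ∂μ) :
    ∀ i j, f i =ᵐ[μ] f j := by
  have hmix : Measurable fun ω => (∑ i, w i * f i ω) ^ q := by fun_prop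
  exact fun i j => eq_ae_of_integral_rpow_mixture_eq_general (strictConvexOn_rpow hq)
    (fun x hx => Real.rpow_nonneg hx q) (fun i _ => hw i) hw1 (fun i _ => .of_forall (hpos i))
    (fun i _ => hint i) hmix.aestronglyMeasurable heq i (Finset.mem_univ i) j (Finset.mem_univ j)
end

section
/- Let N ≥ 1 and m ≥ 1 be integers. Then the limit as q → 1 (q real, q ≠ 1) of (1/(1-q))·log( Γ(N+m)·Γ(qm+1) / (Γ(N+qm)·Γ(m+1)) ) equals m·(ψ(N+m) − ψ(m+1)). (This is the q → 1 limit of the minimal Rényi–Wehrl entropy S^{(q)}_min = (1/(1-q))·log(Γ(N+m)Γ(qm+1)/(Γ(N+qm)Γ(m+1))) for the symmetric representation [1^m] of SU(N), recovering the minimal Wehrl entropy of bosonic coherent states.) -/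
open Filter

/-- The digamma function `ψ(x) = d/dx log Γ(x)`. -/
noncomputable def digamma (x : ℝ) : ℝ := deriv (fun t => Real.log (Real.Gamma t)) x

/-! Put `F(q) = Γ(N + qm) / Γ(qm + 1)`. The argument of the logarithm in the entropy is
`F(1) / F(q)`, so the entropy is the difference quotient of `log F` between `q` and `1`, and its
limit is the logarithmic derivative of `F` at `1`. -/

open scoped Topology

theorem ne_neg_natCast_of_pos {x : ℝ} (hx : 0 < x) (k : ℕ) : x ≠ -k :=
  ((neg_nonpos.mpr k.cast_nonneg).trans_lt hx).ne'

theorem tendsto_one_div_sub_mul_log_div {f : ℝ → ℝ} {a : ℝ} (hf : DifferentiableAt ℝ f a)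
    (ha : f a ≠ 0) :
    Tendsto (fun q => 1 / (a - q) * Real.log (f a / f q)) (𝓝[≠] a) (𝓝 (logDeriv f a)) := by
  have hslope : Tendsto (slope (fun q => Real.log (f q)) a) (𝓝[≠] a) (𝓝 (logDeriv f a)) :=
    (hf.hasDerivAt.log ha).tendsto_slope
  have hne : ∀ᶠ q in 𝓝[≠] a, f q ≠ 0 :=
    (hf.continuousAt.eventually_ne ha).filter_mono nhdsWithin_le_nhds
  refine hslope.congr' ?_
  filter_upwards [hne] with q hq
  rw [slope_comm, slope_def_field, Real.log_div ha hq, one_div_mul_eq_div]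

-- Where `Γ x < 0`, `Real.log (Γ x)` is `log |Γ x|`, whose derivative is still `Γ'(x) / Γ(x)`.
theorem digamma_eq_logDeriv_Gamma {x : ℝ} (hx : ∀ k : ℕ, x ≠ -k) :
    digamma x = logDeriv Real.Gamma x :=
  deriv.log (Real.differentiableAt_Gamma hx) (Real.Gamma_ne_zero hx)

theorem differentiableAt_Gamma_comp {g : ℝ → ℝ} {t : ℝ} (hg : DifferentiableAt ℝ g t)
    (ht : ∀ k : ℕ, g t ≠ -k) : DifferentiableAt ℝ (fun q => Real.Gamma (g q)) t :=
  (Real.differentiableAt_Gamma ht).comp t hg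

theorem logDeriv_Gamma_comp {g : ℝ → ℝ} {t : ℝ} (hg : DifferentiableAt ℝ g t)
    (ht : ∀ k : ℕ, g t ≠ -k) :
    logDeriv (fun q => Real.Gamma (g q)) t = digamma (g t) * deriv g t := by
  rw [digamma_eq_logDeriv_Gamma ht]
  exact logDeriv_comp (Real.differentiableAt_Gamma ht) hg

theorem logDeriv_Gamma_comp_div_Gamma_comp {g h : ℝ → ℝ} {t : ℝ} (hg : DifferentiableAt ℝ g t)
    (hh : DifferentiableAt ℝ h t) (hgt : ∀ k : ℕ, g t ≠ -k) (hht : ∀ k : ℕ, h t ≠ -k) :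
    logDeriv (fun q => Real.Gamma (g q) / Real.Gamma (h q)) t =
      digamma (g t) * deriv g t - digamma (h t) * deriv h t := by
  rw [← logDeriv_Gamma_comp hg hgt, ← logDeriv_Gamma_comp hh hht]
  exact logDeriv_div t (Real.Gamma_ne_zero hgt) (Real.Gamma_ne_zero hht)
    (differentiableAt_Gamma_comp hg hgt) (differentiableAt_Gamma_comp hh hht)

theorem renyi_wehrl_min_limit_boson_general {a b s : ℝ} (ha : ∀ k : ℕ, a + s ≠ -k)
    (hb : ∀ k : ℕ, s + b ≠ -k) :
    Tendsto (fun q : ℝ =>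
        (1 / (1 - q)) * Real.log (Real.Gamma (a + s) * Real.Gamma (q * s + b) /
          (Real.Gamma (a + q * s) * Real.Gamma (s + b))))
      (𝓝[≠] 1) (𝓝 (s * (digamma (a + s) - digamma (s + b)))) := by
  let F : ℝ → ℝ := fun q => Real.Gamma (a + q * s) / Real.Gamma (q * s + b)
  have ha₁ : ∀ k : ℕ, a + 1 * s ≠ -k := by simpa only [one_mul] using ha
  have hb₁ : ∀ k : ℕ, 1 * s + b ≠ -k := by simpa only [one_mul] using hb
  have hnum : DifferentiableAt ℝ (fun q : ℝ => a + q * s) 1 := by fun_prop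
  have hden : DifferentiableAt ℝ (fun q : ℝ => q * s + b) 1 := by fun_prop
  have hF : DifferentiableAt ℝ F 1 :=
    (differentiableAt_Gamma_comp hnum ha₁).div (differentiableAt_Gamma_comp hden hb₁)
      (Real.Gamma_ne_zero hb₁)
  have hF₁ : F 1 ≠ 0 := div_ne_zero (Real.Gamma_ne_zero ha₁) (Real.Gamma_ne_zero hb₁)
  have hlogDeriv : logDeriv F 1 = s * (digamma (a + s) - digamma (s + b)) := by
    rw [logDeriv_Gamma_comp_div_Gamma_comp hnum hden ha₁ hb₁]
    simp [mul_comm s, sub_mul]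
  have hratio (q : ℝ) : F 1 / F q = Real.Gamma (a + s) * Real.Gamma (q * s + b) /
      (Real.Gamma (a + q * s) * Real.Gamma (s + b)) := by
    simp only [F, one_mul, div_div_div_eq, mul_comm (Real.Gamma (s + b))]
  simpa only [hlogDeriv, hratio] using tendsto_one_div_sub_mul_log_div hF hF₁

/-- The `q → 1` limit of the minimal Rényi–Wehrl entropy
`S^{(q)}_min = (1/(1-q))·log(Γ(N+m)Γ(qm+1)/(Γ(N+qm)Γ(m+1)))` for the symmetric representation
`[1^m]` of `SU(N)` is the minimal Wehrl entropy `m(ψ(N+m) − ψ(m+1))` of bosonic coherent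
states. -/
theorem renyi_wehrl_min_limit_boson (N m : ℕ) (hN : 1 ≤ N) (hm : 1 ≤ m) :
    Tendsto (fun q : ℝ =>
        (1 / (1 - q)) * Real.log (Real.Gamma ((N : ℝ) + m) * Real.Gamma (q * m + 1) /
          (Real.Gamma ((N : ℝ) + q * m) * Real.Gamma ((m : ℝ) + 1))))
      (nhdsWithin 1 {(1 : ℝ)}ᶜ)
      (nhds ((m : ℝ) * (digamma ((N : ℝ) + m) - digamma ((m : ℝ) + 1)))) :=
  renyi_wehrl_min_limit_boson_general
    (ne_neg_natCast_of_pos (by positivity)) (ne_neg_natCast_of_pos (by positivity))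
end
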